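/- Let C = 1.25506, E(n) = (n/log n)·(log 4 − C − (log 2 · log 4)/log(2n)), and k(m,n) = log(C(m+n,n))/log(m+n), where C(m+n,n) is the binomial coefficient and log is the natural logarithm. Then for every integer n ≥ 2, k(n,n) > π(n) + E(n) − 1, where π(n) is the number of primes ≤ n. -/

import Mathlib

/-- `E(n) = (n/log n)·(log 4 − C − log 2 · log 4 / log(2n))` with `C = 1.25506`. -/
noncomputable def E (n : ℕ) : ℝ :=
  ((n : ℝ) / Real.log n) *
    (Real.log 4 - 1.25506 - Real.log 2 * Real.log 4 / Real.log (2 * (n : ℝ)))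

/-- `k(m,n) = log(C(m+n,n)) / log(m+n)`. -/
noncomputable def kfun (m n : ℕ) : ℝ :=
  Real.log (Nat.choose (m + n) n) / Real.log ((m : ℝ) + n)

/-!
Since `log 2 = log (2n) - log n`, the right-hand side is
`π(n) + n log 4 / log (2n) - 1.25506 n / log n - 1`. The classical bound `4 ^ n ≤ 2n * C(2n, n)`
says that `k(n, n) ≥ n log 4 / log (2n) - 1`, so everything rests on the Rosser–Schoenfeld
inequality `π(n) log n < 1.25506 n`.

For large `n` this follows from Chebyshev's method. Writing `T(x) = log ⌊x⌋!`, the combination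
`T(x) - T(x/2) - T(x/3) - T(x/5) + T(x/30)` dominates `ψ(x) - ψ(x/6)`, and Stirling's formula
evaluates it as `0.9213 x + O(log x)`; summing over `x, x/6, x/36, …` gives `θ(n) ≤ 1.114 n`.
The difference `π(n) log n - θ(n)` grows by `π(n) log ((n+1)/n)` at each step, so a bound
`0.141 n` for it propagates by induction, and `1.114 + 0.141 < 1.25506`.

The inequality is nearly an equality at `n = 113`, so the range `n ≤ 2 ^ 14 + 2` is checked number
by number, with a sieve that recognises a prime by its being coprime to the product of the smaller
ones; the same computation provides the starting value of the induction.
-/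

open ArithmeticFunction hiding log
open Chebyshev Finset InformationTheory Real
open scoped Nat

/-! ### Stirling bounds -/

theorem monotoneOn_klFun : MonotoneOn klFun (Set.Ici 1) := by
  refine monotoneOn_of_deriv_nonneg (convex_Ici 1) continuous_klFun.continuousOn ?_ ?_
  · intro x hx
    rw [interior_Ici, Set.mem_Ioi] at hx
    exact (hasDerivAt_klFun (by positivity)).differentiableAt.differentiableWithinAt
  · intro x hx
    rw [interior_Ici, Set.mem_Ioi] at hx
    rw [deriv_klFun]
    exact log_nonneg hx.le

theorem log_factorial_le_klFun_add {n : ℕ} (hn : n ≠ 0) :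
    log n ! ≤ klFun n + log n / 2 := by
  obtain ⟨k, rfl⟩ := Nat.exists_eq_succ_of_ne_zero hn
  have stirlingSeq_le : Stirling.stirlingSeq k.succ ≤ exp 1 / √2 :=
    Stirling.stirlingSeq_one ▸ Stirling.stirlingSeq'_antitone (Nat.zero_le k)
  have log_le := log_le_log (Stirling.stirlingSeq'_pos k) stirlingSeq_le
  rw [Stirling.log_stirlingSeq_formula, log_div (exp_ne_zero 1) (by positivity), log_exp,
    log_sqrt (by positivity), log_mul (by positivity) (by positivity),
    log_div (by positivity) (exp_ne_zero 1), log_exp] at log_le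
  rw [klFun_apply]
  linarith

theorem klFun_add_le_log_factorial {n : ℕ} (hn : n ≠ 0) :
    klFun n + log n / 2 - 1 / 2 ≤ log n ! := by
  have stirling := Stirling.le_log_factorial_stirling hn
  have one_le_log : 1 ≤ log (2 * π) := by
    rw [le_log_iff_exp_le (by positivity)]
    linarith [exp_one_lt_three, pi_gt_three]
  rw [klFun_apply]
  linarith

theorem log_factorial_floor_le {x : ℝ} (hx : 0 ≤ x) :
    log ⌊x⌋₊! ≤ klFun x + log⁺ x / 2 := by
  obtain hx1 | hx1 := lt_or_ge x 1
  · rw [Nat.floor_eq_zero.2 hx1, Nat.factorial_zero, Nat.cast_one, log_one]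
    linarith [klFun_nonneg hx, posLog_nonneg (x := x)]
  · have one_le_floor : 1 ≤ (⌊x⌋₊ : ℝ) := mod_cast Nat.floor_pos.2 hx1
    have floor_le := Nat.floor_le hx
    calc log ⌊x⌋₊! ≤ klFun ⌊x⌋₊ + log ⌊x⌋₊ / 2 :=
          log_factorial_le_klFun_add (Nat.floor_pos.2 hx1).ne'
      _ ≤ klFun x + log x / 2 := by
          gcongr
          exact monotoneOn_klFun one_le_floor hx1 floor_le
      _ ≤ klFun x + log⁺ x / 2 := by gcongr; exact le_max_right _ _

theorem le_log_factorial_floor {x : ℝ} (hx : 1 ≤ x) :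
    klFun x - log (x + 1) / 2 - 1 / 2 ≤ log ⌊x⌋₊! := by
  have lt_floor_add_one : x < (⌊x⌋₊ + 1 : ℕ) := mod_cast Nat.lt_floor_add_one x
  have klFun_le : klFun x ≤ klFun (⌊x⌋₊ + 1 : ℕ) :=
    monotoneOn_klFun hx (hx.trans lt_floor_add_one.le) lt_floor_add_one.le
  have log_le : log (⌊x⌋₊ + 1 : ℕ) ≤ log (x + 1) := by
    gcongr
    push_cast
    gcongr
    exact Nat.floor_le (by positivity)
  have factorial_bound := klFun_add_le_log_factorial ⌊x⌋₊.succ_ne_zero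
  rw [Nat.factorial_succ, Nat.cast_mul, log_mul (by positivity) (by positivity)] at factorial_bound
  linarith

theorem log_factorial_eq_sum_vonMangoldt {N M : ℕ} (h : N ≤ M) :
    log N ! = ∑ d ∈ Ioc 0 M, Λ d * (N / d : ℕ) := by
  have log_factorial_eq : log N ! = ∑ n ∈ Ioc 0 N, log n := by
    rw [← prod_Ico_id_eq_factorial, Nat.cast_prod,
      show Ico 1 (N + 1) = Ioc 0 N from Ico_add_one_add_one_eq_Ioc 0 N,
      log_prod fun n hn => Nat.cast_ne_zero.2 (mem_Ioc.1 hn).1.ne']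
  have extend : ∑ d ∈ Ioc 0 N, Λ d * (N / d : ℕ) = ∑ d ∈ Ioc 0 M, Λ d * (N / d : ℕ) := by
    refine sum_subset (Ioc_subset_Ioc_right h) fun d hd hdN => ?_
    have : N < d := by simp only [mem_Ioc] at hd hdN; omega
    rw [Nat.div_eq_of_lt this, Nat.cast_zero, mul_zero]
  rw [log_factorial_eq, ← extend, ← sum_Ioc_mul_zeta_eq_sum, vonMangoldt_mul_zeta]
  simp only [log_apply]

/-! ### Chebyshev's upper bound for `ψ` and `θ` -/

theorem div_two_add_div_three_add_div_five_le {m : ℕ} (hm : m ≠ 0) :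
    m / 2 + m / 3 + m / 5 + (if m < 6 then 1 else 0) ≤ m + m / 30 := by
  split_ifs <;> omega

theorem psi_sub_psi_eq_sum_ite {M N : ℕ} (h : M ≤ N) :
    ψ N - ψ M = ∑ d ∈ Ioc 0 N, Λ d * (if M < d then 1 else 0) := by
  simp only [mul_ite, mul_one, mul_zero]
  rw [← sum_filter, psi, psi, Nat.floor_natCast, Nat.floor_natCast, sub_eq_iff_eq_add',
    ← sum_Ioc_consecutive _ M.zero_le h]
  congr 2
  ext d
  simp only [mem_Ioc, mem_filter]
  omega

theorem psi_sub_psi_div_six_le (N : ℕ) :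
    ψ N - ψ (N / 6 : ℕ) ≤
      log N ! + log (N / 30)! - (log (N / 2)! + log (N / 3)! + log (N / 5)!) := by
  have log_factorial (k : ℕ) := log_factorial_eq_sum_vonMangoldt (Nat.div_le_self N k)
  rw [psi_sub_psi_eq_sum_ite (N.div_le_self 6), log_factorial_eq_sum_vonMangoldt le_rfl,
    log_factorial, log_factorial, log_factorial, log_factorial, ← sum_add_distrib,
    ← sum_add_distrib, ← sum_add_distrib, ← sum_sub_distrib]
  refine sum_le_sum fun d hd => ?_
  rw [mem_Ioc] at hd
  have quotient_lt : N / 6 < d ↔ N / d < 6 := by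
    rw [Nat.div_lt_iff_lt_mul (by positivity), Nat.div_lt_iff_lt_mul hd.1, mul_comm]
  have coeff_le := div_two_add_div_three_add_div_five_le (Nat.div_pos hd.2 hd.1).ne'
  have coeff_le_real : ((N / d / 2 : ℕ) + (N / d / 3 : ℕ) + (N / d / 5 : ℕ) : ℝ) +
      (if N / d < 6 then 1 else 0) ≤ (N / d : ℕ) + (N / d / 30 : ℕ) := mod_cast coeff_le
  simp only [Nat.div_right_comm N _ d, quotient_lt]
  linarith [mul_le_mul_of_nonneg_left coeff_le_real (vonMangoldt_nonneg (n := d))]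

theorem psi_le_psi_div_six_add {N : ℕ} (hN : 5 ≤ N) :
    ψ N ≤ ψ (N / 6 : ℕ) + 0.9216 * N + 5 / 2 * log N + 1 / 2 := by
  have hN' : (5 : ℝ) ≤ N := mod_cast hN
  have upper₁ := log_factorial_le_klFun_add (n := N) (by omega)
  have upper₃₀ := log_factorial_floor_le (x := N / 30) (by positivity)
  have posLog_le : log⁺ ((N : ℝ) / 30) ≤ log N :=
    max_le (log_natCast_nonneg N) (log_le_log (by positivity) (by linarith))
  have lower {k : ℝ} (hk : 2 ≤ k) (hkN : k ≤ N) :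
      klFun (N / k) - log N / 2 - 1 / 2 ≤ log ⌊N / k⌋₊! := by
    have : N / k + 1 ≤ N := by
      have : N / k ≤ N / 2 := by gcongr
      linarith
    have : log (N / k + 1) ≤ log N := log_le_log (by positivity) this
    linarith [le_log_factorial_floor ((one_le_div (by positivity)).2 hkN)]
  have lower₂ := lower (k := 2) (by norm_num) (by linarith)
  have lower₃ := lower (k := 3) (by norm_num) (by linarith)
  have lower₅ := lower (k := 5) (by norm_num) hN'
  have log_thirty : log 30 = log 2 + log 3 + log 5 := by
    rw [← log_mul (by norm_num) (by norm_num), ← log_mul (by norm_num) (by norm_num)]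
    norm_num
  have hN0 : (N : ℝ) ≠ 0 := by positivity
  simp only [Nat.floor_div_ofNat, Nat.floor_natCast, klFun_apply,
    log_div hN0 (by norm_num : (30 : ℝ) ≠ 0), log_div hN0 (by norm_num : (2 : ℝ) ≠ 0),
    log_div hN0 (by norm_num : (3 : ℝ) ≠ 0), log_div hN0 (by norm_num : (5 : ℝ) ≠ 0), log_thirty]
    at upper₁ upper₃₀ lower₂ lower₃ lower₅
  have constant_le : log 2 / 2 + log 3 / 3 + log 5 / 5 - (log 2 + log 3 + log 5) / 30 ≤ 0.9216 := by
    linarith [log_two_lt_d9, log_three_lt_d9, log_five_lt_d9]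
  linarith [psi_sub_psi_div_six_le N, mul_le_mul_of_nonneg_left constant_le N.cast_nonneg]

-- The coefficient is preserved because `0.9216 + 1.106 / 6 ≤ 1.106`, and passing from `log N` to
-- `log (N / 6) ≤ log N - 1.79` in the last two terms gains more than `5 / 2 * log N + 1 / 2`.
theorem psi_le (N : ℕ) : ψ N ≤ 1.106 * N + log N ^ 2 + 2 * log N := by
  induction N using Nat.strong_induction_on with | _ N ih
  obtain hN | hN := lt_or_ge N 6
  · have primeCounting_le : (N.primeCounting : ℝ) ≤ 3 :=
      mod_cast Nat.monotone_primeCounting (Nat.le_of_lt_succ hN)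
    have log_le : log N ≤ N := log_le_self N.cast_nonneg
    nlinarith [psi_le_primeCounting_mul_log N, log_natCast_nonneg N, N.cast_nonneg (α := ℝ)]
  · have log_quotient_nonneg := log_natCast_nonneg (N / 6)
    have log_quotient_le : log (N / 6 : ℕ) ≤ log N - 1.79 := by
      have log_six : log 6 = log 2 + log 3 := by rw [← log_mul] <;> norm_num
      calc log (N / 6 : ℕ) ≤ log (N / 6) :=
            log_le_log (mod_cast Nat.div_pos hN (by norm_num)) (mod_cast Nat.cast_div_le)
        _ = log N - log 6 := log_div (by positivity) (by norm_num)
        _ ≤ log N - 1.79 := by linarith [log_two_gt_d9, log_three_gt_d9]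
    have quotient_le : ((N / 6 : ℕ) : ℝ) ≤ N / 6 := mod_cast Nat.cast_div_le (m := N) (n := 6)
    have sq_le : log (N / 6 : ℕ) ^ 2 ≤ (log N - 1.79) ^ 2 := by gcongr
    linarith [ih (N / 6) (by omega), psi_le_psi_div_six_add (N := N) (by omega)]

theorem theta_le {N : ℕ} (hN : 2 ^ 14 ≤ N) : θ N ≤ 1.114 * N := by
  have hN' : (2 : ℝ) ^ 14 ≤ N := mod_cast hN
  have sqrt_two_pow : √((2 : ℝ) ^ 14) = 128 := by
    rw [show (2 : ℝ) ^ 14 = 128 ^ 2 by norm_num, sqrt_sq (by norm_num)]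
  have sqrt_ge : 128 ≤ √(N : ℝ) := sqrt_two_pow ▸ sqrt_le_sqrt hN'
  have log_le : log N ≤ 0.0759 * √N := by
    have exp_two_le : exp 2 ≤ 2 ^ 14 := by
      rw [show (2 : ℝ) = 1 + 1 by norm_num, exp_add]
      nlinarith [exp_one_lt_three, exp_pos 1]
    have ratio_le := log_div_sqrt_antitoneOn exp_two_le (exp_two_le.trans hN') hN'
    rw [← div_le_iff₀ (by positivity)]
    calc log N / √N ≤ log (2 ^ 14) / √(2 ^ 14) := ratio_le
      _ = 14 * log 2 / 128 := by rw [sqrt_two_pow, log_pow]; norm_num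
      _ ≤ 0.0759 := by linarith [log_two_lt_d9]
  have sq_sqrt_N := sq_sqrt (N.cast_nonneg (α := ℝ))
  have log_sq_le : log N ^ 2 ≤ (0.0759 * √N) ^ 2 :=
    pow_le_pow_left₀ (log_natCast_nonneg N) log_le 2
  nlinarith [theta_le_psi N, psi_le N]

/-! ### From `θ` to `π` -/

/-- The error `π(n) log n - θ(n) = ∫ π(t)/t dt` (over `[2, n]`) in the estimate
`θ(n) ≤ π(n) log n`. It exchanges bounds for `θ` and for `π`. -/
noncomputable def thetaGap (n : ℕ) : ℝ :=
  n.primeCounting * log n - θ n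

theorem thetaGap_two : thetaGap 2 = 0 := by
  have primesLE_two : Nat.primesLE 2 = {2} := by decide
  rw [thetaGap, theta_eq_sum_primesLE_log, ← Nat.primesLE_card_eq_primeCounting, primesLE_two]
  simp

theorem primeCounting_add_one (n : ℕ) :
    (n + 1).primeCounting = if (n + 1).Prime then n.primeCounting + 1 else n.primeCounting := by
  simp only [← Nat.primesLE_card_eq_primeCounting, Nat.primesLE_succ]
  split_ifs
  · rw [card_insert_of_notMem n.notMem_primesLE]
  · rfl

theorem primorial_add_one (n : ℕ) :
    primorial (n + 1) = if (n + 1).Prime then primorial n * (n + 1) else primorial n := by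
  simp only [primorial_eq_prod_primesLE, Nat.primesLE_succ]
  split_ifs
  · rw [prod_insert n.notMem_primesLE, mul_comm]
  · rfl

theorem theta_add_one (n : ℕ) :
    θ (n + 1 : ℕ) = if (n + 1).Prime then θ n + log (n + 1 : ℕ) else θ n := by
  simp only [theta_eq_sum_primesLE_log, Nat.primesLE_succ]
  split_ifs
  · rw [sum_insert n.notMem_primesLE, add_comm]
  · rfl

theorem thetaGap_add_one (n : ℕ) :
    thetaGap (n + 1) = thetaGap n + n.primeCounting * (log (n + 1 : ℕ) - log n) := by
  rw [thetaGap, thetaGap, primeCounting_add_one, theta_add_one]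
  split_ifs
  · push_cast
    ring
  · ring

theorem primeCounting_le_of_thetaGap_le {n : ℕ} (hn : 2 ^ 14 ≤ n)
    (hgap : thetaGap n ≤ 0.141 * n) : n.primeCounting ≤ 0.141 * (n : ℝ) := by
  have log_ge : 9.7 ≤ log n := by
    calc 9.7 ≤ 14 * log 2 := by linarith [log_two_gt_d9]
      _ = log (2 ^ 14) := by rw [log_pow, Nat.cast_ofNat]
      _ ≤ log n := log_le_log (by positivity) (mod_cast hn)
  have pi_mul_le : (n.primeCounting : ℝ) * 9.7 ≤ n.primeCounting * log n := by gcongr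
  rw [thetaGap] at hgap
  linarith [theta_le hn]

theorem thetaGap_le {N₀ n : ℕ} (hN₀ : 2 ^ 14 ≤ N₀) (start : thetaGap N₀ ≤ 0.141 * N₀)
    (hn : N₀ ≤ n) : thetaGap n ≤ 0.141 * n := by
  induction n, hn using Nat.le_induction with
  | base => exact start
  | succ n hn ih =>
    have hn_pos : (0 : ℝ) < n := mod_cast (by omega : 0 < n)
    have log_increment_le : log (n + 1 : ℕ) - log n ≤ 1 / n := by
      rw [← log_div (by positivity) (by positivity)]
      refine (log_le_sub_one_of_pos (by positivity)).trans_eq ?_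
      push_cast
      field_simp
      ring
    calc thetaGap (n + 1) = thetaGap n + n.primeCounting * (log (n + 1 : ℕ) - log n) :=
          thetaGap_add_one n
      _ ≤ 0.141 * n + 0.141 * n * (1 / n) := by
          gcongr
          · exact sub_nonneg.2 (log_le_log hn_pos (by simp))
          · exact primeCounting_le_of_thetaGap_le (hN₀.trans hn) ih
      _ = 0.141 * (n + 1 : ℕ) := by
          push_cast
          field_simp

/-! ### The range up to `2 ^ 14 + 2` -/

theorem cast_div_le_div_add_one (a b : ℕ) : (a : ℝ) / b ≤ (a / b : ℕ) + 1 := by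
  rw [← Nat.floor_div_eq_div (K := ℝ)]
  exact (Nat.lt_floor_add_one _).le

theorem log_add_one_sub_log_le {x : ℝ} (hx : 0 < x) :
    log (x + 1) - log x ≤
      2 / (2 * x + 1) + 2 / (3 * (2 * x + 1) ^ 3) + 2 / (5 * (2 * x + 1) ^ 5) +
        2 / (7 * (2 * x + 1) ^ 7) + 1 / (2 * x * (x + 1) * (2 * x + 1) ^ 7) := by
  have ratio : (x + 1) / x = (1 + 1 / (2 * x + 1)) / (1 - 1 / (2 * x + 1)) := by
    have : 2 * x + 1 - 1 ≠ 0 := by simp [hx.ne']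
    field_simp
    ring
  have remainder : (1 / (2 * x + 1)) ^ (2 * 4 + 1) / (1 - (1 / (2 * x + 1)) ^ 2) =
      1 / (4 * x * (x + 1) * (2 * x + 1) ^ 7) := by
    have : 1 - (1 / (2 * x + 1)) ^ 2 = 4 * x * (x + 1) / (2 * x + 1) ^ 2 := by
      field_simp
      ring
    rw [this, one_div_pow]
    field_simp
  calc log (x + 1) - log x
      = 2 * (1 / 2 * log ((1 + 1 / (2 * x + 1)) / (1 - 1 / (2 * x + 1)))) := by
        rw [← ratio, log_div (by positivity) hx.ne']
        ring
    _ ≤ 2 * (∑ i ∈ range 4, (1 / (2 * x + 1)) ^ (2 * i + 1) / (2 * i + 1) +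
          (1 / (2 * x + 1)) ^ (2 * 4 + 1) / (1 - (1 / (2 * x + 1)) ^ 2)) := by
        gcongr
        refine log_div_le_sum_range_add (by positivity) ?_ 4
        rw [div_lt_one (by positivity)]
        linarith
    _ = _ := by
        rw [remainder]
        simp only [sum_range_succ, range_zero, sum_empty, one_div_pow]
        push_cast
        field_simp
        ring

/-- An integer upper bound for `10 ^ 12 * (log (m + 1) - log m)`, from the series
`log (m + 1) - log m = 2 artanh (1 / (2 * m + 1))`. The `5` pays for the five truncated
divisions. -/
def logIncrementBound (m : ℕ) : ℕ :=
  2 * 10 ^ 12 / (2 * m + 1) + 2 * 10 ^ 12 / (3 * (2 * m + 1) ^ 3) +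
    2 * 10 ^ 12 / (5 * (2 * m + 1) ^ 5) + 2 * 10 ^ 12 / (7 * (2 * m + 1) ^ 7) +
    10 ^ 12 / (2 * m * (m + 1) * (2 * m + 1) ^ 7) + 5

theorem log_add_one_sub_log_le_logIncrementBound {m : ℕ} (hm : m ≠ 0) :
    10 ^ 12 * (log (m + 1 : ℕ) - log m) ≤ logIncrementBound m := by
  have hm_pos : (0 : ℝ) < m := mod_cast hm.pos
  have scaled := mul_le_mul_of_nonneg_left (log_add_one_sub_log_le hm_pos)
    (by positivity : (0 : ℝ) ≤ 10 ^ 12)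
  have rounding₁ := cast_div_le_div_add_one (2 * 10 ^ 12) (2 * m + 1)
  have rounding₃ := cast_div_le_div_add_one (2 * 10 ^ 12) (3 * (2 * m + 1) ^ 3)
  have rounding₅ := cast_div_le_div_add_one (2 * 10 ^ 12) (5 * (2 * m + 1) ^ 5)
  have rounding₇ := cast_div_le_div_add_one (2 * 10 ^ 12) (7 * (2 * m + 1) ^ 7)
  have rounding₉ := cast_div_le_div_add_one (10 ^ 12) (2 * m * (m + 1) * (2 * m + 1) ^ 7)
  rw [logIncrementBound]
  push_cast at *
  simp only [div_eq_mul_inv] at *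
  linarith

theorem coprime_primorial_mod_iff_prime {n : ℕ} (hn : n ≠ 0) :
    (primorial n % (n + 1)).Coprime (n + 1) ↔ (n + 1).Prime := by
  rw [Nat.Coprime, (Nat.mod_modEq (primorial n) (n + 1)).gcd_eq, ← Nat.Coprime]
  constructor
  · intro hcop
    by_contra hprime
    have minFac_prime := Nat.minFac_prime (n := n + 1) (by omega)
    have minFac_lt : (n + 1).minFac < n + 1 := (Nat.not_prime_iff_minFac_lt (by omega)).1 hprime
    exact Nat.Prime.not_coprime_iff_dvd.2 ⟨_, minFac_prime,
      minFac_prime.dvd_primorial_iff.2 (Nat.le_of_lt_succ minFac_lt), Nat.minFac_dvd _⟩ hcop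
  · intro hprime
    rw [Nat.coprime_comm, hprime.coprime_iff_not_dvd, hprime.dvd_primorial_iff]
    exact n.not_succ_le_self

/-- Applies `f` to `n` by cases on `n`, which makes kernel reduction evaluate `n` to a numeral
before it is substituted into `f`. -/
def withValue {α : Type*} (n : ℕ) (f : ℕ → α) : α :=
  match n with
  | 0 => f 0
  | k + 1 => f (k + 1)

theorem withValue_eq {α : Type*} (n : ℕ) (f : ℕ → α) : withValue n f = f n := by
  cases n <;> rfl

/-- The data carried by the sieve at `n`: the product and the number of the primes up to `n`, and
upper bounds for `log n` and `thetaGap n`, both scaled by `10 ^ 12`. -/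
structure SieveState where
  n : ℕ
  primeProd : ℕ
  primeCount : ℕ
  logBound : ℕ
  gapBound : ℕ

namespace SieveState

/-- The fields of `s` hold the values and bounds that `SieveState` describes, which is the invariant
of the sieve. -/
structure IsValid (s : SieveState) : Prop where
  n_ne_zero : s.n ≠ 0
  primeProd_eq : s.primeProd = primorial s.n
  primeCount_eq : s.primeCount = s.n.primeCounting
  log_le : 10 ^ 12 * log s.n ≤ s.logBound
  thetaGap_le : 10 ^ 12 * thetaGap s.n ≤ s.gapBound

/-- The state at `n + 1`, provided that the bounds it records witness
`π (n + 1) * log (n + 1) < 1.25506 * (n + 1)`. -/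
def next : SieveState → Option SieveState
  | ⟨m, P, c, L, W⟩ =>
    withValue (m + 1) fun n =>
    withValue (if (P % n).Coprime n then P * n else P) fun P' =>
    withValue (if (P % n).Coprime n then c + 1 else c) fun c' =>
    withValue (L + logIncrementBound m) fun L' =>
    withValue (W + c * logIncrementBound m) fun W' =>
    if c' * L' < 125506 * 10 ^ 7 * n then some ⟨n, P', c', L', W'⟩ else none

/-- Performs `2 ^ k` steps. Doubling keeps the recursion depth of the kernel logarithmic. -/
def run : ℕ → SieveState → Option SieveState
  | 0, s => s.next
  | k + 1, s => (run k s).bind (run k)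

/-- The state at `2`, where `thetaGap` vanishes and `log 2 < 0.6931471808`. -/
def start : SieveState := ⟨2, 2, 1, 693147180800, 0⟩

theorem isValid_start : start.IsValid where
  n_ne_zero := two_ne_zero
  primeProd_eq := primorial_two.symm
  primeCount_eq := by decide
  log_le := by
    norm_num [start]
    linarith [log_two_lt_d9]
  thetaGap_le := by simp [start, thetaGap_two]

theorem IsValid.next {s t : SieveState} (hs : s.IsValid) (h : s.next = some t) :
    t.IsValid ∧ t.n = s.n + 1 ∧ t.n.primeCounting * log t.n < 1.25506 * t.n := by
  obtain ⟨m, P, c, L, W⟩ := s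
  obtain ⟨hm, hP, hc, hL, hW⟩ := hs
  dsimp only at hm hP hc hL hW
  subst hP hc
  have increment_le := log_add_one_sub_log_le_logIncrementBound hm
  simp only [SieveState.next, withValue_eq, coprime_primorial_mod_iff_prime hm,
    ← primorial_add_one, ← primeCounting_add_one, Option.ite_none_right_eq_some,
    Option.some.injEq] at h
  obtain ⟨check, rfl⟩ := h
  have log_le : 10 ^ 12 * log (m + 1 : ℕ) ≤ (L + logIncrementBound m : ℕ) := by
    push_cast at *
    linarith
  have thetaGap_le : 10 ^ 12 * thetaGap (m + 1) ≤
      (W + m.primeCounting * logIncrementBound m : ℕ) := by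
    rw [thetaGap_add_one]
    push_cast at *
    linarith [mul_le_mul_of_nonneg_left increment_le m.primeCounting.cast_nonneg]
  refine ⟨⟨m.succ_ne_zero, rfl, rfl, log_le, thetaGap_le⟩, rfl, ?_⟩
  have check' : ((m + 1).primeCounting : ℝ) * (L + logIncrementBound m : ℕ) <
      125506 * 10 ^ 7 * (m + 1 : ℕ) := mod_cast check
  linarith [mul_le_mul_of_nonneg_left log_le (m + 1).primeCounting.cast_nonneg]

theorem IsValid.run {k : ℕ} {s t : SieveState} (hs : s.IsValid) (h : s.run k = some t) :
    t.IsValid ∧ t.n = s.n + 2 ^ k ∧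
      ∀ m ∈ Ioc s.n t.n, m.primeCounting * log m < 1.25506 * m := by
  induction k generalizing s t with
  | zero =>
    obtain ⟨ht, n_eq, bound⟩ := hs.next h
    refine ⟨ht, n_eq, fun m hm => ?_⟩
    obtain rfl : m = t.n := by rw [mem_Ioc] at hm; omega
    exact bound
  | succ k ih =>
    obtain ⟨u, su, ut⟩ := Option.bind_eq_some_iff.1 h
    obtain ⟨hu, u_eq, bound_u⟩ := ih hs su
    obtain ⟨ht, t_eq, bound_t⟩ := ih hu ut
    refine ⟨ht, by omega, fun m hm => ?_⟩
    rw [mem_Ioc] at hm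
    obtain hmu | hum := le_or_gt m u.n
    · exact bound_u m (mem_Ioc.2 ⟨hm.1, hmu⟩)
    · exact bound_t m (mem_Ioc.2 ⟨hum, hm.2⟩)

theorem exists_run_start_eq_some :
    ∃ t, start.run 14 = some t ∧ t.gapBound ≤ 2200 * 10 ^ 12 := by
  have run_start : (start.run 14).any (fun t => t.gapBound ≤ 2200 * 10 ^ 12) = true := by
    decide +kernel
  simpa only [Option.any_eq_true, decide_eq_true_eq] using run_start

end SieveState

theorem primeCounting_mul_log_lt_of_le {n : ℕ} (h2 : 2 < n) (hn : n ≤ 2 ^ 14 + 2) :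
    n.primeCounting * log n < 1.25506 * n := by
  obtain ⟨t, run_eq, -⟩ := SieveState.exists_run_start_eq_some
  obtain ⟨-, n_eq, bound⟩ := SieveState.isValid_start.run run_eq
  exact bound n (mem_Ioc.2 ⟨h2, by rw [n_eq, add_comm]; exact hn⟩)

theorem thetaGap_two_pow_fourteen_add_two_le : thetaGap (2 ^ 14 + 2) ≤ 2200 := by
  obtain ⟨t, run_eq, gapBound_le⟩ := SieveState.exists_run_start_eq_some
  obtain ⟨ht, n_eq, -⟩ := SieveState.isValid_start.run run_eq
  have gapBound_le_real : (t.gapBound : ℝ) ≤ 2200 * 10 ^ 12 := mod_cast gapBound_le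
  have thetaGap_le := ht.thetaGap_le
  rw [n_eq, SieveState.start, add_comm] at thetaGap_le
  linarith

theorem primeCounting_mul_log_lt {n : ℕ} (hn : n ≠ 0) :
    n.primeCounting * log n < 1.25506 * n := by
  obtain hn2 | hn2 := le_or_gt n 2
  · have primeCounting_le : (n.primeCounting : ℝ) ≤ 1 := mod_cast Nat.monotone_primeCounting hn2
    have hn_pos : (0 : ℝ) < n := by positivity
    nlinarith [log_natCast_nonneg n, log_le_self hn_pos.le]
  obtain hsmall | hlarge := le_or_gt n (2 ^ 14 + 2)
  · exact primeCounting_mul_log_lt_of_le hn2 hsmall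
  · have hn_pos : (0 : ℝ) < n := by positivity
    have gap_le : thetaGap n ≤ 0.141 * n :=
      thetaGap_le (by norm_num)
        (thetaGap_two_pow_fourteen_add_two_le.trans (by norm_num)) hlarge.le
    rw [thetaGap] at gap_le
    linarith [theta_le (N := n) (by omega)]

/-! ### The central binomial coefficient -/

theorem E_eq_sub {n : ℕ} (hn : 2 ≤ n) :
    E n = n * log 4 / log (2 * n) - 1.25506 * n / log n := by
  have hn' : (2 : ℝ) ≤ n := mod_cast hn
  have log_n_pos : 0 < log n := log_pos (by linarith)
  have log_two_mul : log (2 * n) = log 2 + log n := log_mul (by norm_num) (by positivity)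
  rw [E, log_two_mul]
  field_simp
  ring

theorem mul_log_four_div_sub_one_le_kfun {n : ℕ} (hn : n ≠ 0) :
    n * log 4 / log (2 * n) - 1 ≤ kfun n n := by
  have hn' : (1 : ℝ) ≤ n := mod_cast hn.pos
  have log_two_mul_pos : 0 < log (2 * n) := log_pos (by linarith)
  have four_pow_le : (4 : ℝ) ^ n ≤ 2 * n * n.centralBinom :=
    mod_cast n.four_pow_le_two_mul_self_mul_centralBinom hn.pos
  have log_le := log_le_log (by positivity) four_pow_le
  rw [log_pow, log_mul (by positivity) (mod_cast n.centralBinom_ne_zero)] at log_le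
  rw [kfun, ← two_mul, ← two_mul, ← Nat.centralBinom_eq_two_mul_choose,
    div_sub_one log_two_mul_pos.ne']
  gcongr
  linarith

/-- For every `n ≥ 2`, `k(n,n) > π(n) + E(n) − 1`. -/
theorem stmt_9 (n : ℕ) (hn : n ≥ 2) :
    kfun n n > (Nat.primeCounting n : ℝ) + E n - 1 := by
  have log_n_pos : 0 < log n := log_pos (mod_cast hn)
  have pi_lt : n.primeCounting < 1.25506 * n / log n :=
    (lt_div_iff₀ log_n_pos).2 (primeCounting_mul_log_lt (by omega))
  linarith [E_eq_sub hn, mul_log_four_div_sub_one_le_kfun (n := n) (by omega)]
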